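/- arXiv:2210.15352 — 3 statements merged into one kernel-verified Lean document; each statement's English description precedes it below -/
import Mathlib

section
/- For every integer n ≥ 1 there exist δ > 0 and C > 0 such that for every z ∈ ℂ with 0 < |z| < δ one has |ζ_n(z) − (1/(2(2n+1)) − z²/((2n+3)(2n+1)(2n−1)))| ≤ C·|z|³. -/
/-!
Both Bessel functions are a power of `z` times an even power series with coefficients bounded by
one: `jb n z = z ^ n * A (z ^ 2)` and `yb n z = -P * z ^ (-n - 1) * B (z ^ 2)`, where
`P = 1 * 3 * ⋯ * (2 n - 1)`. Splitting off the first two coefficients of `A` and `B` gives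
`z * deriv (jb n) z = z ^ n * (n a₀ + (n + 2) a₁ z ^ 2 + z ^ 4 H z)` with `H` continuous at `0`, so
the contribution of `yb` to `zetaB` is a polynomial in `z ^ 2`, with the coefficients claimed, plus
`z ^ 4` times a function continuous at `0`. The contribution of `jb` is `z ^ (2 n + 1)` times a
function continuous at `0`, and `2 n + 1 ≥ 3`. Hence the error is `z ^ 3` times a function
continuous, thus bounded, near `0`.
-/

open Complex

/-- Spherical Bessel function of the first kind (series definition). -/
noncomputable def jb (n : ℕ) (z : ℂ) : ℂ :=
  ∑' p : ℕ, ((-1 : ℂ) ^ p * z ^ (n + 2 * p)) /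
    ((2 : ℂ) ^ p * (Nat.factorial p : ℂ) * ∏ q ∈ Finset.range (n + p + 1), (2 * (q : ℂ) + 1))

/-- Spherical Bessel function of the second kind (series definition). -/
noncomputable def yb (n : ℕ) (z : ℂ) : ℂ :=
  -((Nat.factorial (2 * n) : ℂ) / ((2 : ℂ) ^ n * (Nat.factorial n : ℂ))) *
    ∑' p : ℕ, ((-1 : ℂ) ^ p * z ^ (2 * (p : ℤ) - (n : ℤ) - 1)) /
      ((2 : ℂ) ^ p * (Nat.factorial p : ℂ) *
        ∏ q ∈ Finset.Icc 1 p, (-2 * (n : ℂ) + 2 * (q : ℂ) - 1))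

/-- Spherical Hankel function of the first kind. -/
noncomputable def hb (n : ℕ) (z : ℂ) : ℂ := jb n z + Complex.I * yb n z

noncomputable def xiB (n : ℕ) (z : ℂ) : ℂ := -Complex.I * z * jb n z * hb n z

noncomputable def zetaB (n : ℕ) (z : ℂ) : ℂ :=
  1 / 2 - Complex.I * z ^ 2 * deriv (jb n) z * hb n z

/-- The sum of the power series with coefficients `a`. -/
noncomputable def ser (a : ℕ → ℂ) (w : ℂ) : ℂ := ∑' p, a p * w ^ p

lemma ser_summable {a : ℕ → ℂ} (ha : ∀ p, ‖a p‖ ≤ 1) {w : ℂ} (hw : ‖w‖ < 1) :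
    Summable fun p => a p * w ^ p := by
  refine Summable.of_norm_bounded (summable_geometric_of_lt_one (norm_nonneg w) hw) fun p => ?_
  rw [norm_mul, norm_pow]
  exact mul_le_of_le_one_left (by positivity) (ha p)

lemma ser_split {a : ℕ → ℂ} (ha : ∀ p, ‖a p‖ ≤ 1) {w : ℂ} (hw : ‖w‖ < 1) :
    ser a w = a 0 + a 1 * w + w ^ 2 * ser (fun p => a (p + 2)) w := by
  unfold ser
  rw [← (ser_summable ha hw).sum_add_tsum_nat_add 2, ← tsum_mul_left]
  simp only [Finset.sum_range_succ, Finset.sum_range_zero, zero_add, pow_zero, mul_one, pow_one]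
  congr 2
  funext p
  ring

lemma ser_differentiableOn {a : ℕ → ℂ} (ha : ∀ p, ‖a p‖ ≤ 1) :
    DifferentiableOn ℂ (ser a) (Metric.ball 0 (1 / 2)) := by
  refine Complex.differentiableOn_tsum_of_summable_norm (u := fun p => (1 / 2 : ℝ) ^ p)
    (summable_geometric_of_lt_one (by norm_num) (by norm_num)) (fun p => by fun_prop)
    Metric.isOpen_ball fun p w hw => ?_
  rw [norm_mul, norm_pow]
  have hw' : ‖w‖ ≤ 1 / 2 := by simpa using (mem_ball_zero_iff.1 hw).le
  calc ‖a p‖ * ‖w‖ ^ p ≤ 1 * (1 / 2) ^ p := by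
        gcongr
        exact ha p
    _ = _ := one_mul _

/-- Coefficients of `jb n z / z ^ n` as a power series in `z ^ 2`. -/
noncomputable def coefJ (n p : ℕ) : ℂ :=
  (-1 : ℂ) ^ p / ((2 : ℂ) ^ p * (Nat.factorial p : ℂ) *
    ∏ q ∈ Finset.range (n + p + 1), (2 * (q : ℂ) + 1))

/-- Coefficients of `yb n z * z ^ (n + 1)` as a power series in `z ^ 2`, normalized so that the
constant one is `1`. -/
noncomputable def coefY (n p : ℕ) : ℂ :=
  (-1 : ℂ) ^ p / ((2 : ℂ) ^ p * (Nat.factorial p : ℂ) *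
    ∏ q ∈ Finset.Icc 1 p, (-2 * (n : ℂ) + 2 * (q : ℂ) - 1))

/-- A nonzero integer has absolute value at least one, so no growth estimate is needed. -/
lemma norm_sign_div_intCast_le (p : ℕ) {m : ℤ} (hm : m ≠ 0) : ‖(-1 : ℂ) ^ p / (m : ℂ)‖ ≤ 1 := by
  rw [norm_div, norm_pow, norm_neg, norm_one, one_pow, Complex.norm_intCast]
  have h : (1 : ℝ) ≤ |(m : ℝ)| := by exact_mod_cast Int.one_le_abs hm
  exact div_le_one_of_le₀ h (abs_nonneg _)

lemma norm_coefJ_le (n p : ℕ) : ‖coefJ n p‖ ≤ 1 := by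
  have := norm_sign_div_intCast_le p
    (m := 2 ^ p * (Nat.factorial p : ℤ) * ∏ q ∈ Finset.range (n + p + 1), (2 * (q : ℤ) + 1))
    (by positivity)
  push_cast at this
  exact this

lemma norm_coefY_le (n p : ℕ) : ‖coefY n p‖ ≤ 1 := by
  have := norm_sign_div_intCast_le p
    (m := 2 ^ p * (Nat.factorial p : ℤ) * ∏ q ∈ Finset.Icc 1 p, (-2 * (n : ℤ) + 2 * (q : ℤ) - 1))
    (by
      refine mul_ne_zero (by positivity) (Finset.prod_ne_zero_iff.2 fun q _ => ?_)
      omega)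
  push_cast at this
  exact this

lemma jb_eq_ser (n : ℕ) (z : ℂ) : jb n z = z ^ n * ser (coefJ n) (z ^ 2) := by
  unfold jb ser coefJ
  rw [← tsum_mul_left]
  congr 1
  funext p
  rw [pow_add, pow_mul]
  ring

lemma factorial_two_mul (n : ℕ) : ((2 * n).factorial : ℂ) =
    2 ^ n * (n.factorial : ℂ) * ∏ q ∈ Finset.range n, (2 * (q : ℂ) + 1) := by
  induction n with
  | zero => simp
  | succ n ih =>
    rw [show 2 * (n + 1) = 2 * n + 1 + 1 by ring, Nat.factorial_succ, Nat.factorial_succ,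
      Nat.factorial_succ, Finset.prod_range_succ]
    push_cast
    rw [ih]
    ring

lemma yb_eq_ser (n : ℕ) {z : ℂ} (hz : z ≠ 0) :
    yb n z = -(∏ q ∈ Finset.range n, (2 * (q : ℂ) + 1)) * (z ^ (n + 1))⁻¹ *
      ser (coefY n) (z ^ 2) := by
  have hf : (n.factorial : ℂ) ≠ 0 := by exact_mod_cast n.factorial_ne_zero
  unfold yb ser coefY
  rw [factorial_two_mul, mul_div_cancel_left₀ _ (mul_ne_zero (pow_ne_zero n two_ne_zero) hf), mul_assoc]
  congr 1
  rw [← tsum_mul_left]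
  congr 1
  funext p
  have : z ^ (2 * (p : ℤ) - (n : ℤ) - 1) = (z ^ 2) ^ p * (z ^ (n + 1))⁻¹ := by
    rw [sub_sub, zpow_sub₀ hz, div_eq_mul_inv, zpow_mul]
    norm_cast
  rw [this]
  ring

/-- The remainder in the expansion of `z * deriv (jb n) z / z ^ n`, divided by `z ^ 4`. -/
noncomputable def remJ (n : ℕ) (z : ℂ) : ℂ :=
  ((n : ℂ) + 4) * ser (fun p => coefJ n (p + 2)) (z ^ 2) +
    2 * z ^ 2 * deriv (ser fun p => coefJ n (p + 2)) (z ^ 2)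

lemma norm_sq_lt_half {z : ℂ} (hz : ‖z‖ < 1 / 2) : ‖z ^ 2‖ < 1 / 2 := by
  rw [norm_pow]
  nlinarith [norm_nonneg z]

lemma mul_deriv_jb (n : ℕ) {z : ℂ} (hz : ‖z‖ < 1 / 2) :
    z * deriv (jb n) z =
      z ^ n * (n * coefJ n 0 + (n + 2) * coefJ n 1 * z ^ 2 + z ^ 4 * remJ n z) := by
  set F := ser fun p => coefJ n (p + 2) with hF
  have hw := norm_sq_lt_half hz
  have hd : HasDerivAt F (deriv F (z ^ 2)) (z ^ 2) :=
    ((ser_differentiableOn fun p => norm_coefJ_le n (p + 2)).differentiableAt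
      (Metric.isOpen_ball.mem_nhds (mem_ball_zero_iff.2 hw))).hasDerivAt
  have hFz : HasDerivAt (fun x : ℂ => F (x ^ 2)) (deriv F (z ^ 2) * (2 * z)) z := by
    have := hd.comp z (hasDerivAt_pow 2 z)
    simpa [Function.comp_def] using this
  have hev : jb n =ᶠ[nhds z] fun x => coefJ n 0 * x ^ n + coefJ n 1 * x ^ (n + 2) +
      x ^ (n + 4) * F (x ^ 2) := by
    filter_upwards [Metric.isOpen_ball.mem_nhds (mem_ball_zero_iff.2 hz)] with x hx
    rw [jb_eq_ser, ser_split (norm_coefJ_le n)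
      ((norm_sq_lt_half (mem_ball_zero_iff.1 hx)).trans (by norm_num))]
    ring
  have hder := ((((hasDerivAt_pow n z).const_mul (coefJ n 0)).add
    ((hasDerivAt_pow (n + 2) z).const_mul (coefJ n 1))).add
    ((hasDerivAt_pow (n + 4) z).mul hFz)).congr_of_eventuallyEq hev
  have hn : (n : ℂ) * (z * z ^ (n - 1)) = n * z ^ n := by
    -- for `n = 0` the exponent `n - 1` truncates, but the factor `n` vanishes
    rcases n with _ | n
    · simp
    · rw [Nat.add_sub_cancel, pow_succ']
  rw [hder.deriv, remJ, ← hF, show n + 2 - 1 = n + 1 by omega, show n + 4 - 1 = n + 3 by omega]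
  push_cast
  linear_combination coefJ n 0 * hn

lemma ser_analyticAt {a : ℕ → ℂ} (ha : ∀ p, ‖a p‖ ≤ 1) : AnalyticAt ℂ (ser a) 0 :=
  (ser_differentiableOn ha).analyticAt (Metric.isOpen_ball.mem_nhds (by simp))

lemma continuousAt_comp_sq {f : ℂ → ℂ} (hf : ContinuousAt f 0) :
    ContinuousAt (fun z : ℂ => f (z ^ 2)) 0 :=
  ContinuousAt.comp (f := fun z : ℂ => z ^ 2) (by simpa using hf) (by fun_prop)

lemma remJ_continuousAt (n : ℕ) : ContinuousAt (remJ n) 0 := by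
  have h := ser_analyticAt fun p => norm_coefJ_le n (p + 2)
  have h1 := continuousAt_comp_sq h.continuousAt
  have h2 := continuousAt_comp_sq h.deriv.continuousAt
  unfold remJ
  fun_prop

/-- Asymptotic expansion of ζₙ (n ≥ 1) near the origin:
ζₙ(z) = 1/(2(2n+1)) − z²/((2n+3)(2n+1)(2n−1)) + O(z³). -/
theorem zetan_asymptotic (n : ℕ) (hn : 1 ≤ n) :
    ∃ δ > (0 : ℝ), ∃ C > (0 : ℝ), ∀ z : ℂ, 0 < ‖z‖ → ‖z‖ < δ →
      ‖zetaB n z - (1 / (2 * (2 * (n : ℂ) + 1)) -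
          z ^ 2 / ((2 * (n : ℂ) + 3) * (2 * (n : ℂ) + 1) * (2 * (n : ℂ) - 1)))‖
        ≤ C * ‖z‖ ^ 3 := by
  set P : ℂ := ∏ q ∈ Finset.range n, (2 * (q : ℂ) + 1) with hP
  set G := ser fun p => coefY n (p + 2) with hG
  set b : ℂ := coefY n 1 with hb1
  set a : ℂ := coefJ n 0 with ha0
  set a' : ℂ := coefJ n 1 with ha1
  -- `D z = z * deriv (jb n) z / z ^ n`
  set D : ℂ → ℂ := fun z => n * a + (n + 2) * a' * z ^ 2 + z ^ 4 * remJ n z with hD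
  -- the error divided by `z ^ 3`
  set K : ℂ → ℂ := fun z =>
    -P * z * ((n + 2) * a' * b + remJ n z * (1 + b * z ^ 2) + D z * G (z ^ 2)) -
      I * (z ^ (2 * (n - 1)) * D z * ser (coefJ n) (z ^ 2)) with hK
  have hKc : ContinuousAt K 0 := by
    have h1 := remJ_continuousAt n
    have h2 := continuousAt_comp_sq (ser_analyticAt (norm_coefJ_le n)).continuousAt
    have h3 : ContinuousAt (fun z : ℂ => G (z ^ 2)) 0 :=
      continuousAt_comp_sq (ser_analyticAt fun p => norm_coefY_le n (p + 2)).continuousAt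
    have h4 : ContinuousAt D 0 := by
      rw [hD]
      fun_prop
    have h5 : ContinuousAt (fun z => (n + 2) * a' * b + remJ n z * (1 + b * z ^ 2)) 0 := by
      fun_prop
    exact ((continuousAt_const.mul continuousAt_id).mul (h5.add (h4.mul h3))).sub
      (continuousAt_const.mul (((continuousAt_id.pow _).mul h4).mul h2))
  have hbd : ∀ᶠ z in nhds (0 : ℂ), ‖K z‖ < ‖K 0‖ + 1 :=
    hKc.norm.eventually_lt continuousAt_const (by simp)
  obtain ⟨ε, hε, hball⟩ := Metric.eventually_nhds_iff.1 hbd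
  refine ⟨min ε (1 / 2), by positivity, ‖K 0‖ + 1, by positivity, fun z hz0 hz => ?_⟩
  have hz1 : ‖z‖ < 1 / 2 := hz.trans_le (min_le_right _ _)
  have hz' : z ≠ 0 := norm_pos_iff.1 hz0
  suffices h : zetaB n z - (1 / (2 * (2 * (n : ℂ) + 1)) -
      z ^ 2 / ((2 * (n : ℂ) + 3) * (2 * (n : ℂ) + 1) * (2 * (n : ℂ) - 1))) = K z * z ^ 3 by
    rw [h, norm_mul, norm_pow]
    gcongr
    exact (hball (by simpa using hz.trans_le (min_le_left _ _))).le
  have hodd1 : (2 * (n : ℂ) + 1) ≠ 0 := by exact_mod_cast (show 2 * n + 1 ≠ 0 by omega)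
  have hodd3 : (2 * (n : ℂ) + 3) ≠ 0 := by exact_mod_cast (show 2 * n + 3 ≠ 0 by omega)
  have hoddm : (2 * (n : ℂ) - 1) ≠ 0 := by exact_mod_cast (show 2 * (n : ℤ) - 1 ≠ 0 by omega)
  have hP0 : P ≠ 0 :=
    Finset.prod_ne_zero_iff.2 fun q _ => by exact_mod_cast (show 2 * q + 1 ≠ 0 by omega)
  have hPa : P * a = 1 / (2 * n + 1) := by
    rw [ha0, coefJ]
    simp only [add_zero, Finset.prod_range_succ, ← hP]
    simp
    field_simp
  have hPa' : P * a' = -1 / (2 * (2 * n + 1) * (2 * n + 3)) := by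
    rw [ha1, coefJ]
    simp only [Finset.prod_range_succ, ← hP]
    have : (2 * ((n : ℂ) + 1) + 1) = 2 * n + 3 := by ring
    simp [this]
    field_simp
  have hbv : b = 1 / (2 * (2 * n - 1)) := by
    have : (-2 * (n : ℂ) + 2 - 1) = -(2 * n - 1) := by ring
    rw [hb1, coefY]
    simp only [Finset.Icc_self, Finset.prod_singleton, Nat.cast_one, mul_one, this]
    rw [pow_one, pow_one, Nat.factorial_one, Nat.cast_one, mul_one, mul_neg, neg_div_neg_eq]
  have hJ : z ^ 2 * deriv (jb n) z = z ^ (n + 1) * D z := by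
    linear_combination z * mul_deriv_jb n hz1
  have hY : z ^ (n + 1) * yb n z = -P * (1 + b * z ^ 2 + z ^ 4 * G (z ^ 2)) := by
    have h0 : coefY n 0 = 1 := by simp [coefY]
    rw [yb_eq_ser n hz', ser_split (norm_coefY_le n)
      ((norm_sq_lt_half hz1).trans (by norm_num)), h0, ← hP, ← hG, ← hb1]
    field_simp
  have hpow : z ^ (n + 1) * z ^ n = z ^ (2 * (n - 1)) * z ^ 3 := by
    rw [← pow_add, ← pow_add]
    congr 1
    omega
  have hcoef0 : (1 : ℂ) / 2 - n * (P * a) = 1 / (2 * (2 * n + 1)) := by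
    rw [hPa]
    field_simp
    ring
  have hcoef2 : (n : ℂ) * (P * a) * b + (n + 2) * (P * a') =
      1 / ((2 * n + 3) * (2 * n + 1) * (2 * n - 1)) := by
    rw [hPa, hPa', hbv]
    rw [mul_comm] at hodd1 hodd3 hoddm
    field_simp
    ring
  have hexp : zetaB n z = 1 / 2 - P * D z * (1 + b * z ^ 2 + z ^ 4 * G (z ^ 2)) -
      I * (z ^ (2 * (n - 1)) * z ^ 3 * D z * ser (coefJ n) (z ^ 2)) := by
    rw [zetaB, hb, mul_assoc I, hJ, jb_eq_ser]
    linear_combination D z * hY - I * D z * ser (coefJ n) (z ^ 2) * hpow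
      - z ^ (n + 1) * D z * yb n z * I_sq
  rw [hexp, div_eq_mul_one_div (z ^ 2), ← hcoef0, ← hcoef2]
  simp only [hK, hD]
  ring
end

section
/- There exist δ > 0 and C > 0 such that for every integer n ≥ 1 and every z ∈ ℂ with 0 < |z| < δ one has |ζ_n(z)| ≤ C/n. -/
/-!
For `‖z‖ < 1` the leading terms are `j_n(z) ≈ z^n / D` and `y_n(z) ≈ -K z^(-n-1)` with
`D = (2n+1)‼` and `K = (2n-1)‼ = D / (2n+1)`. After factoring these out, each of the three
series for `j_n`, `z j_n'` and `y_n` has tails dominated by `M (1/2)^p` (`tsum_near_first`):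
`j_n = (z^n/D)(1 + ε)`, `z j_n' = (z^n/D)(n + β)`, `y_n = -K z^(-n-1) (1 + γ)` with
`‖ε‖, ‖β‖ ≤ 1` and `‖γ‖ ≤ 1/n`. Hence
`ζ_n = 1/2 - (n + β)(1 + γ)/(2n+1) - i z (z^n/D)² (n + β)(1 + ε)`. The terms of order one cancel,
since `1/2 - n/(2n+1) = 1/(2(2n+1))`, and the last term is small because `D ≥ 2n+1`.
-/

open Complex

/-- A series dominated by `M (1/2)^p` from its second term on differs from its first term by
at most `M`. -/
lemma tsum_near_first (f : ℕ → ℂ) (M : ℝ)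
    (h : ∀ p, ‖f (p + 1)‖ ≤ M * (1 / 2) ^ (p + 1)) :
    Summable f ∧ ‖∑' p, f p - f 0‖ ≤ M := by
  have hg : HasSum (fun p : ℕ => M * (1 / 2 : ℝ) ^ (p + 1)) M := by
    have := (hasSum_geometric_two.mul_left (M * (1 / 2)))
    have e1 : (fun p : ℕ => M * (1 / 2) * (1 / 2 : ℝ) ^ p) = fun p => M * (1 / 2) ^ (p + 1) := by
      funext p; ring
    rwa [e1, show M * (1 / 2) * 2 = M by ring] at this
  have hs1 : Summable (fun p => f (p + 1)) := Summable.of_norm_bounded hg.summable h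
  have hs : Summable f := (summable_nat_add_iff 1).1 hs1
  refine ⟨hs, ?_⟩
  rw [hs.tsum_eq_zero_add, add_sub_cancel_left]
  exact tsum_of_norm_bounded hg h

/-- The quotient `(2(n+p)+1)‼ / (2n+1)‼`. -/
noncomputable def oddQuot (n p : ℕ) : ℂ := ∏ x ∈ Finset.range p, (2 * ((n + 1 + x : ℕ) : ℂ) + 1)

lemma norm_odd (m : ℕ) : ‖(2 * (m : ℂ) + 1)‖ = 2 * (m : ℝ) + 1 := by
  have : (2 * (m : ℂ) + 1) = ((2 * m + 1 : ℕ) : ℂ) := by push_cast; ring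
  rw [this, Complex.norm_natCast]; push_cast; ring

lemma oddQuot_norm_ge (n p : ℕ) : 2 * (n : ℝ) + 3 ≤ ‖oddQuot n (p + 1)‖ := by
  induction p with
  | zero =>
    simp only [oddQuot, zero_add, Finset.prod_range_one, norm_odd]
    push_cast; linarith
  | succ p ih =>
    rw [oddQuot, Finset.prod_range_succ, norm_mul, norm_odd]
    have h1 : (1 : ℝ) ≤ 2 * ((n + 1 + (p + 1) : ℕ) : ℝ) + 1 := by
      have := Nat.cast_nonneg (α := ℝ) (n + 1 + (p + 1)); linarith
    exact ih.trans (le_mul_of_one_le_right (norm_nonneg _) h1)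

lemma oddQuot_norm_ge_one (n p : ℕ) : 1 ≤ ‖oddQuot n p‖ := by
  cases p with
  | zero => simp [oddQuot]
  | succ p =>
    have := oddQuot_norm_ge n p
    have := Nat.cast_nonneg (α := ℝ) n
    linarith

/-- The double factorial `(2n+1)‼`. -/
noncomputable def oddFact (n : ℕ) : ℂ := ∏ q ∈ Finset.range (n + 1), (2 * (q : ℂ) + 1)

lemma prod_odd_split (n p : ℕ) :
    ∏ q ∈ Finset.range (n + p + 1), (2 * (q : ℂ) + 1) = oddFact n * oddQuot n p := by
  rw [show n + p + 1 = n + 1 + p by ring, Finset.prod_range_add, oddFact, oddQuot]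

lemma oddFact_norm_ge (n : ℕ) : 2 * (n : ℝ) + 1 ≤ ‖oddFact n‖ := by
  cases n with
  | zero => simp [oddFact]
  | succ n =>
    rw [oddFact, Finset.prod_range_succ, norm_mul, norm_odd]
    refine le_mul_of_one_le_left (by positivity) ?_
    rw [norm_prod]
    refine Finset.prod_induction _ (fun x : ℝ => 1 ≤ x)
      (fun _ _ => one_le_mul_of_one_le_of_one_le) le_rfl fun i _ => ?_
    rw [norm_odd]
    have := Nat.cast_nonneg (α := ℝ) i
    linarith

lemma oddFact_ne_zero (n : ℕ) : oddFact n ≠ 0 := by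
  have := oddFact_norm_ge n
  have := Nat.cast_nonneg (α := ℝ) n
  exact norm_pos_iff.1 (by linarith)

lemma factorial_ratio (n : ℕ) :
    (Nat.factorial (2 * n) : ℂ) / ((2 : ℂ) ^ n * (Nat.factorial n : ℂ))
      = oddFact n / (2 * (n : ℂ) + 1) := by
  have hn : (2 * (n : ℂ) + 1) ≠ 0 := by exact_mod_cast Nat.succ_ne_zero (2 * n)
  rw [oddFact, Finset.prod_range_succ, mul_div_cancel_right₀ _ hn]
  have hf : (2 : ℂ) ^ n * (Nat.factorial n : ℂ) ≠ 0 :=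
    mul_ne_zero (pow_ne_zero _ two_ne_zero) (Nat.cast_ne_zero.2 n.factorial_ne_zero)
  rw [div_eq_iff hf]
  clear hf hn
  induction n with
  | zero => simp
  | succ n ih =>
    rw [show 2 * (n + 1) = 2 * n + 1 + 1 by ring, Nat.factorial_succ, Nat.factorial_succ,
      Nat.factorial_succ, Finset.prod_range_succ]
    push_cast
    rw [ih]
    ring

lemma yprod_norm_ge (n p : ℕ) (hn : 1 ≤ n) :
    (n : ℝ) ≤ ‖∏ q ∈ Finset.Icc 1 (p + 1), (-2 * (n : ℂ) + 2 * (q : ℂ) - 1)‖ := by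
  have hc (q : ℕ) : (-2 * (n : ℂ) + 2 * (q : ℂ) - 1) = ((-2 * n + 2 * q - 1 : ℤ) : ℂ) := by
    push_cast; ring
  induction p with
  | zero =>
    simp only [zero_add, Finset.Icc_self, Finset.prod_singleton]
    rw [hc, Complex.norm_intCast]
    have : (n : ℤ) ≤ |(-2 * n + 2 * (1 : ℕ) - 1 : ℤ)| := by
      refine le_trans ?_ (neg_le_abs _)
      push_cast; omega
    exact_mod_cast this
  | succ p ih =>
    rw [Finset.prod_Icc_succ_top (by omega), norm_mul]
    refine ih.trans (le_mul_of_one_le_right (norm_nonneg _) ?_)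
    rw [hc, Complex.norm_intCast]
    -- the factor is an odd integer, hence nonzero
    have : (1 : ℤ) ≤ |(-2 * n + 2 * (p + 1 + 1 : ℕ) - 1 : ℤ)| :=
      Int.one_le_abs (by omega)
    exact_mod_cast this

lemma half_pow_bound (p : ℕ) :
    (p : ℝ) / ((2 : ℝ) ^ p * (Nat.factorial p : ℝ)) ≤ (1 / 2) ^ p := by
  have h1 : (p : ℝ) ≤ (Nat.factorial p : ℝ) := by exact_mod_cast p.self_le_factorial
  have h2 : (0 : ℝ) < (Nat.factorial p : ℝ) := by exact_mod_cast p.factorial_pos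
  rw [div_le_iff₀ (by positivity), div_pow, one_pow]
  field_simp
  exact h1

lemma jb_term (n p : ℕ) (z : ℂ) :
    ((-1 : ℂ) ^ p * z ^ (n + 2 * p)) /
    ((2 : ℂ) ^ p * (Nat.factorial p : ℂ) * ∏ q ∈ Finset.range (n + p + 1), (2 * (q : ℂ) + 1))
    = z ^ n / oddFact n *
      ((-1 : ℂ) ^ p * z ^ (2 * p) / ((2 : ℂ) ^ p * (Nat.factorial p : ℂ) * oddQuot n p)) := by
  rw [prod_odd_split, div_mul_div_comm, pow_add]
  congr 1 <;> ring

lemma norm_pow_le_one {z : ℂ} (hz : ‖z‖ < 1) (k : ℕ) : ‖z ^ k‖ ≤ 1 := by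
  rw [norm_pow]; exact pow_le_one₀ (norm_nonneg _) hz.le

lemma quot_bound (n p : ℕ) (z : ℂ) (hz : ‖z‖ < 1) :
    ‖(-1 : ℂ) ^ p * z ^ (2 * p) / ((2 : ℂ) ^ p * (Nat.factorial p : ℂ) * oddQuot n p)‖
      ≤ 1 / ((2 : ℝ) ^ p * (Nat.factorial p : ℝ) * ‖oddQuot n p‖) := by
  have h1 := oddQuot_norm_ge_one n p
  have h2 : (0 : ℝ) < (Nat.factorial p : ℝ) := by exact_mod_cast p.factorial_pos
  rw [norm_div, norm_mul, norm_mul, norm_mul, norm_pow (-1 : ℂ), norm_pow (2 : ℂ)]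
  simp only [norm_neg, norm_one, one_pow, one_mul, Complex.norm_natCast, Complex.norm_ofNat]
  gcongr
  exact norm_pow_le_one hz _

lemma jb_expansion (n : ℕ) (z : ℂ) (hz : ‖z‖ < 1) :
    ∃ e : ℂ, ‖e‖ ≤ 1 ∧ jb n z = z ^ n / oddFact n * (1 + e) := by
  obtain ⟨-, hb⟩ := tsum_near_first (fun p => (-1 : ℂ) ^ p * z ^ (2 * p) /
    ((2 : ℂ) ^ p * (Nat.factorial p : ℂ) * oddQuot n p)) 1 (fun p => by
      refine (quot_bound n (p + 1) z hz).trans ?_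
      refine le_trans ?_ ((half_pow_bound (p + 1)).trans_eq (one_mul _).symm)
      have h2 : (0 : ℝ) < (Nat.factorial (p + 1) : ℝ) := by exact_mod_cast (p + 1).factorial_pos
      have h1 := oddQuot_norm_ge_one n (p + 1)
      have h3 : (1 : ℝ) ≤ ((p + 1 : ℕ) : ℝ) := by exact_mod_cast Nat.le_add_left 1 p
      apply div_le_div₀ (by positivity) h3 (by positivity)
      exact le_mul_of_one_le_right (by positivity) h1)
  refine ⟨_, hb, ?_⟩
  rw [jb]
  simp only [jb_term, tsum_mul_left]
  simp [oddQuot]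

lemma jb_deriv_expansion (n : ℕ) (hn : 1 ≤ n) (z : ℂ) (hz : ‖z‖ < 1) :
    ∃ b : ℂ, ‖b‖ ≤ 1 ∧ z * deriv (jb n) z = z ^ n / oddFact n * (n + b) := by
  have hder := Complex.hasSum_deriv_of_summable_norm
    (F := fun (p : ℕ) (w : ℂ) => ((-1 : ℂ) ^ p * w ^ (n + 2 * p)) /
      ((2 : ℂ) ^ p * (Nat.factorial p : ℂ) * ∏ q ∈ Finset.range (n + p + 1), (2 * (q : ℂ) + 1)))
    (u := fun p : ℕ => (1 / 2 : ℝ) ^ p) (U := Metric.ball 0 1) (z := z)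
    (summable_geometric_two)
    (fun p => by fun_prop) Metric.isOpen_ball
    (fun p w hw => by
      have hw1 : ‖w‖ < 1 := by simpa using hw
      rw [jb_term, norm_mul, norm_div]
      have h0 : ‖w ^ n‖ / ‖oddFact n‖ ≤ 1 := by
        have := oddFact_norm_ge n
        have h3 := Nat.cast_nonneg (α := ℝ) n
        rw [div_le_one (by linarith)]
        linarith [norm_pow_le_one hw1 n]
      have h1 := quot_bound n p w hw1
      have h2 : (1 : ℝ) ≤ (Nat.factorial p : ℝ) := by exact_mod_cast p.factorial_pos
      have h3 := oddQuot_norm_ge_one n p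
      refine (mul_le_of_le_one_left (norm_nonneg _) h0).trans (h1.trans ?_)
      rw [div_pow, one_pow, mul_assoc]
      gcongr
      exact le_mul_of_one_le_right (by positivity) (one_le_mul_of_one_le_of_one_le h2 h3))
    (by simpa using hz)
  have hd : deriv (jb n) z = _ := hder.tsum_eq.symm
  have hterm (p : ℕ) : z * deriv (fun w : ℂ => ((-1 : ℂ) ^ p * w ^ (n + 2 * p)) /
      ((2 : ℂ) ^ p * (Nat.factorial p : ℂ) *
        ∏ q ∈ Finset.range (n + p + 1), (2 * (q : ℂ) + 1))) z
      = z ^ n / oddFact n * (((n + 2 * p : ℕ) : ℂ) * ((-1 : ℂ) ^ p * z ^ (2 * p) /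
        ((2 : ℂ) ^ p * (Nat.factorial p : ℂ) * oddQuot n p))) := by
    rw [mul_left_comm, ← jb_term, deriv_div_const, deriv_const_mul _ (by fun_prop), deriv_pow_field]
    have : z ^ (n + 2 * p) = z * z ^ (n + 2 * p - 1) := by
      rw [← pow_succ']; congr 1; omega
    rw [this]
    ring
  obtain ⟨-, hb⟩ := tsum_near_first (fun p => ((n + 2 * p : ℕ) : ℂ) * ((-1 : ℂ) ^ p * z ^ (2 * p) /
        ((2 : ℂ) ^ p * (Nat.factorial p : ℂ) * oddQuot n p))) 1 (fun p => by
      rw [norm_mul, Complex.norm_natCast]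
      refine (mul_le_mul_of_nonneg_left (quot_bound n (p + 1) z hz) (Nat.cast_nonneg _)).trans ?_
      refine le_trans ?_ ((half_pow_bound (p + 1)).trans_eq (one_mul _).symm)
      have h2 : (0 : ℝ) < (Nat.factorial (p + 1) : ℝ) := by exact_mod_cast (p + 1).factorial_pos
      have h1 := oddQuot_norm_ge n p
      have h3 : (0 : ℝ) < ‖oddQuot n (p + 1)‖ :=
        lt_of_lt_of_le one_pos (oddQuot_norm_ge_one n (p + 1))
      -- `n + 2p ≤ p (2n + 3)` for `p ≥ 1`
      have h4 : ((n + 2 * (p + 1) : ℕ) : ℝ) ≤ ((p + 1 : ℕ) : ℝ) * ‖oddQuot n (p + 1)‖ := by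
        refine le_trans ?_ (mul_le_mul_of_nonneg_left h1 (Nat.cast_nonneg _))
        push_cast
        nlinarith [Nat.cast_nonneg (α := ℝ) n, Nat.cast_nonneg (α := ℝ) p,
          mul_nonneg (Nat.cast_nonneg (α := ℝ) n) (Nat.cast_nonneg (α := ℝ) p)]
      rw [mul_one_div, div_le_div_iff₀ (by positivity) (by positivity)]
      calc _ ≤ (((p + 1 : ℕ) : ℝ) * ‖oddQuot n (p + 1)‖) *
            ((2 : ℝ) ^ (p + 1) * (Nat.factorial (p + 1) : ℝ)) := by gcongr
        _ = _ := by ring)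
  refine ⟨_, hb, ?_⟩
  rw [hd, ← tsum_mul_left]
  simp only [hterm, tsum_mul_left]
  simp [oddQuot]

lemma yb_expansion (n : ℕ) (hn : 1 ≤ n) (z : ℂ) (hz : ‖z‖ < 1) (hz0 : z ≠ 0) :
    ∃ g : ℂ, ‖g‖ ≤ 1 / (n : ℝ) ∧
      z ^ (n + 1) * yb n z = -(oddFact n / (2 * (n : ℂ) + 1)) * (1 + g) := by
  have hn0 : (0 : ℝ) < n := by exact_mod_cast hn
  obtain ⟨-, hb⟩ := tsum_near_first (fun p => (-1 : ℂ) ^ p * z ^ (2 * p) /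
      ((2 : ℂ) ^ p * (Nat.factorial p : ℂ) *
        ∏ q ∈ Finset.Icc 1 p, (-2 * (n : ℂ) + 2 * (q : ℂ) - 1))) (1 / (n : ℝ)) (fun p => by
      have h1 := yprod_norm_ge n p hn
      have h2 : (1 : ℝ) ≤ (Nat.factorial (p + 1) : ℝ) := by exact_mod_cast (p + 1).factorial_pos
      rw [norm_div, norm_mul, norm_mul, norm_mul, norm_pow (-1 : ℂ), norm_pow (2 : ℂ)]
      simp only [norm_neg, norm_one, one_pow, one_mul, Complex.norm_natCast, Complex.norm_ofNat]
      rw [div_pow, one_pow, div_mul_div_comm, one_mul]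
      apply div_le_div₀ zero_le_one (norm_pow_le_one hz _) (by positivity)
      rw [mul_comm]
      exact mul_le_mul (le_mul_of_one_le_right (by positivity) h2) h1 hn0.le (by positivity))
  refine ⟨_, hb, ?_⟩
  rw [yb, factorial_ratio, mul_left_comm, ← tsum_mul_left]
  have hterm (p : ℕ) : z ^ (n + 1) * (((-1 : ℂ) ^ p * z ^ (2 * (p : ℤ) - (n : ℤ) - 1)) /
      ((2 : ℂ) ^ p * (Nat.factorial p : ℂ) *
        ∏ q ∈ Finset.Icc 1 p, (-2 * (n : ℂ) + 2 * (q : ℂ) - 1))) =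
      (-1 : ℂ) ^ p * z ^ (2 * p) / ((2 : ℂ) ^ p * (Nat.factorial p : ℂ) *
        ∏ q ∈ Finset.Icc 1 p, (-2 * (n : ℂ) + 2 * (q : ℂ) - 1)) := by
    have : z ^ (n + 1) * z ^ (2 * (p : ℤ) - (n : ℤ) - 1) = z ^ (2 * p) := by
      rw [← zpow_natCast, ← zpow_natCast, ← zpow_add₀ hz0]
      congr 1; push_cast; ring
    rw [← this]; ring
  simp only [hterm]
  simp

/-- Uniform decay of the eigenvalues ζₙ: ζₙ(z) = O(1/n) uniformly for 0 < |z| ≪ 1. -/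
theorem zetan_uniform_decay :
    ∃ δ > (0 : ℝ), ∃ C > (0 : ℝ), ∀ n : ℕ, 1 ≤ n → ∀ z : ℂ, 0 < ‖z‖ → ‖z‖ < δ →
      ‖zetaB n z‖ ≤ C / (n : ℝ) := by
  refine ⟨1, one_pos, 3, by norm_num, fun n hn z hz0' hz => ?_⟩
  have hz0 : z ≠ 0 := norm_pos_iff.1 hz0'
  obtain ⟨e, he, hj⟩ := jb_expansion n z hz
  obtain ⟨b, hb, hd⟩ := jb_deriv_expansion n hn z hz
  obtain ⟨g, hg, hy⟩ := yb_expansion n hn z hz hz0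
  have hn0 : (0 : ℝ) < n := by exact_mod_cast hn
  have hn1 : (1 : ℝ) ≤ n := by exact_mod_cast hn
  have hD := oddFact_ne_zero n
  have hDn := oddFact_norm_ge n
  have h21 : (2 * (n : ℂ) + 1) ≠ 0 := by exact_mod_cast Nat.succ_ne_zero (2 * n)
  have hdy : z ^ 2 * deriv (jb n) z * yb n z = -((n + b) * (1 + g) / (2 * (n : ℂ) + 1)) := by
    have hzn : z ^ n ≠ 0 := pow_ne_zero _ hz0
    apply mul_left_cancel₀ hzn
    calc z ^ n * (z ^ 2 * deriv (jb n) z * yb n z)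
        = (z * deriv (jb n) z) * (z ^ (n + 1) * yb n z) := by ring
      _ = _ := by rw [hd, hy]; field_simp
  have key : zetaB n z = (1 / 2 - b - n * g - b * g) / (2 * (n : ℂ) + 1)
      - Complex.I * z * ((z ^ n / oddFact n * (n + b)) * (z ^ n / oddFact n * (1 + e))) := by
    calc zetaB n z = 1 / 2 - Complex.I * z * ((z * deriv (jb n) z) * jb n z)
          - Complex.I ^ 2 * (z ^ 2 * deriv (jb n) z * yb n z) := by
            rw [zetaB, _root_.hb]; ring
      _ = _ := by
        rw [hdy, hd, hj, Complex.I_sq]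
        field_simp
        ring
  rw [key]
  have A : ‖(1 / 2 - b - n * g - b * g) / (2 * (n : ℂ) + 1)‖ ≤ 2 / n := by
    have hg1 : ‖g‖ ≤ 1 := hg.trans (by rw [div_le_one hn0]; exact hn1)
    have hng : ‖(n : ℂ) * g‖ ≤ 1 := by
      rw [norm_mul, Complex.norm_natCast]
      calc (n : ℝ) * ‖g‖ ≤ n * (1 / n) := by gcongr
        _ = 1 := by field_simp
    have hbg : ‖b * g‖ ≤ 1 := by
      rw [norm_mul]; exact mul_le_one₀ hb (norm_nonneg _) hg1
    have hh : ‖(1 / 2 : ℂ)‖ = 1 / 2 := by norm_num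
    have : ‖1 / 2 - b - n * g - b * g‖ ≤ 4 := by
      have t1 := norm_sub_le (1 / 2 - b - n * g) (b * g)
      have t2 := norm_sub_le (1 / 2 - b) (n * g)
      have t3 := norm_sub_le (1 / 2) b
      linarith
    rw [norm_div, norm_odd, div_le_div_iff₀ (by positivity) hn0]
    nlinarith
  have B : ‖Complex.I * z * ((z ^ n / oddFact n * (n + b)) * (z ^ n / oddFact n * (1 + e)))‖
      ≤ 1 / n := by
    have hq : ‖z ^ n / oddFact n‖ ≤ 1 / (2 * (n : ℝ) + 1) := by
      rw [norm_div]
      exact div_le_div₀ zero_le_one (norm_pow_le_one hz n) (by positivity) hDn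
    have hnb : ‖(n : ℂ) + b‖ ≤ n + 1 := by
      refine (norm_add_le _ _).trans ?_
      rw [Complex.norm_natCast]; linarith
    have he1 : ‖1 + e‖ ≤ 2 := by
      refine (norm_add_le _ _).trans ?_
      rw [norm_one]; linarith
    calc _ = ‖z‖ * ((‖z ^ n / oddFact n‖ * ‖(n : ℂ) + b‖) * (‖z ^ n / oddFact n‖ * ‖1 + e‖)) := by
          simp only [norm_mul, Complex.norm_I, one_mul]
      _ ≤ 1 * ((1 / (2 * (n : ℝ) + 1) * (n + 1)) * (1 / (2 * (n : ℝ) + 1) * 2)) := by gcongr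
      _ = (2 * (n + 1)) / (2 * (n : ℝ) + 1) ^ 2 := by field_simp
      _ ≤ 1 / n := by
        rw [div_le_div_iff₀ (by positivity) hn0]
        nlinarith
  calc _ ≤ 2 / (n : ℝ) + 1 / n := (norm_sub_le _ _).trans (add_le_add A B)
    _ = 3 / n := by ring
end

section
/- For every integer n ≥ 1 and every real k > 0 one has the identity η_n(k) = −i·( n(n+1)·j_n(k_s)h_n(k_s)/(μ·k_s) − n(n+1)·j_n(k_p)h_n(k_p)/((λ+2μ)·k_p) + n·k_p·j_{n−1}(k_p)h_{n−1}(k_p)/((λ+2μ)(2n+1)) + (n+1)·k_p·j_{n+1}(k_p)h_{n+1}(k_p)/((λ+2μ)(2n+1)) ). -/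
/-!
Both `jb` and `yb` satisfy the three-term recurrence
`f (n-1) z + f (n+1) z = (2n+1) / z * f n z`, hence so does `hb`. With it the identity is algebra.
In `etaN` the `k_s` terms factor as `n(n+1)(j_{n-1} + j_{n+1})(h_{n-1} + h_{n+1})`, which the
recurrence turns into a multiple of `j_n h_n`. The `k_p` terms are
`n² j_{n-1}h_{n-1} - n(n+1)(j_{n+1}h_{n-1} + j_{n-1}h_{n+1}) + (n+1)² j_{n+1}h_{n+1}`,
and this equals
`-n(n+1)(j_{n-1} + j_{n+1})(h_{n-1} + h_{n+1}) + (2n+1)(n j_{n-1}h_{n-1} + (n+1) j_{n+1}h_{n+1})`.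

The recurrences are proved coefficient by coefficient, after pulling a power of `z` out of each
series so that it becomes a power series in `z²`. Convergence follows by comparison with the
exponential series, because the odd factors in the denominators have absolute value at least `1`.
-/

open Complex

/-- Shear wavenumber k_s = k/√μ, as a complex number. -/
noncomputable def ksC (mu k : ℝ) : ℂ := ((k / Real.sqrt mu : ℝ) : ℂ)

/-- Pressure wavenumber k_p = k/√(λ+2μ), as a complex number. -/
noncomputable def kpC (lam mu k : ℝ) : ℂ := ((k / Real.sqrt (lam + 2 * mu) : ℝ) : ℂ)

noncomputable def c1n (lam mu : ℝ) (n : ℕ) (k : ℝ) : ℂ :=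
  -Complex.I * (((n : ℂ) + 1) * ksC mu k * jb (n - 1) (ksC mu k) * hb (n - 1) (ksC mu k) /
      ((mu : ℂ) * (2 * (n : ℂ) + 1)) +
    (n : ℂ) * kpC lam mu k * jb (n - 1) (kpC lam mu k) * hb (n - 1) (kpC lam mu k) /
      (((lam : ℂ) + 2 * (mu : ℂ)) * (2 * (n : ℂ) + 1)))

noncomputable def d1n (lam mu : ℝ) (n : ℕ) (k : ℝ) : ℂ :=
  -Complex.I * ((n : ℂ) * ksC mu k * jb (n - 1) (ksC mu k) * hb (n + 1) (ksC mu k) /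
      ((mu : ℂ) * (2 * (n : ℂ) + 1)) -
    (n : ℂ) * kpC lam mu k * jb (n - 1) (kpC lam mu k) * hb (n + 1) (kpC lam mu k) /
      (((lam : ℂ) + 2 * (mu : ℂ)) * (2 * (n : ℂ) + 1)))

noncomputable def c2n (lam mu : ℝ) (n : ℕ) (k : ℝ) : ℂ :=
  -Complex.I * (((n : ℂ) + 1) * ksC mu k * jb (n + 1) (ksC mu k) * hb (n - 1) (ksC mu k) /
      ((mu : ℂ) * (2 * (n : ℂ) + 1)) -
    ((n : ℂ) + 1) * kpC lam mu k * jb (n + 1) (kpC lam mu k) * hb (n - 1) (kpC lam mu k) /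
      (((lam : ℂ) + 2 * (mu : ℂ)) * (2 * (n : ℂ) + 1)))

noncomputable def d2n (lam mu : ℝ) (n : ℕ) (k : ℝ) : ℂ :=
  -Complex.I * ((n : ℂ) * ksC mu k * jb (n + 1) (ksC mu k) * hb (n + 1) (ksC mu k) /
      ((mu : ℂ) * (2 * (n : ℂ) + 1)) +
    ((n : ℂ) + 1) * kpC lam mu k * jb (n + 1) (kpC lam mu k) * hb (n + 1) (kpC lam mu k) /
      (((lam : ℂ) + 2 * (mu : ℂ)) * (2 * (n : ℂ) + 1)))

/-- The eigenvalue ηₙ(k) of ν·S_{∂B}^{k} acting on Yₙᵐ ν. -/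
noncomputable def etaN (lam mu : ℝ) (n : ℕ) (k : ℝ) : ℂ :=
  ((n : ℂ) * (c1n lam mu n k + c2n lam mu n k) +
    ((n : ℂ) + 1) * (d1n lam mu n k + d2n lam mu n k)) / (2 * (n : ℂ) + 1)

/-- The general term, in the variable `w = z²`, of the series defining `jb` and `yb`; `c` is the
product of odd numbers in the denominator. -/
noncomputable def besselTerm (c : ℕ → ℂ) (w : ℂ) (p : ℕ) : ℂ :=
  (-1 : ℂ) ^ p * w ^ p / ((2 : ℂ) ^ p * (Nat.factorial p : ℂ) * c p)

/-- The denominator product `1 · 3 ⋯ (2(n+p)+1)` of `jb n`. -/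
noncomputable def oddProdJ (n p : ℕ) : ℂ := ∏ q ∈ Finset.range (n + p + 1), (2 * (q : ℂ) + 1)

/-- The denominator product of `yb n`, indexed from `0` instead of `1`. -/
noncomputable def oddProdY (n p : ℕ) : ℂ := ∏ q ∈ Finset.range p, (-2 * (n : ℂ) + 2 * (q : ℂ) + 1)

/-- The normalising factor `(2n)! / (2ⁿ n!) = (2n-1)‼` of `yb n`. -/
noncomputable def normY (n : ℕ) : ℂ :=
  (Nat.factorial (2 * n) : ℂ) / ((2 : ℂ) ^ n * (Nat.factorial n : ℂ))

lemma one_le_norm_odd (a : ℤ) : 1 ≤ ‖(2 * (a : ℂ) + 1)‖ := by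
  have h : (2 * (a : ℂ) + 1) = ((2 * a + 1 : ℤ) : ℂ) := by push_cast; ring
  rw [h, Complex.norm_intCast]
  have h1 : (1 : ℤ) ≤ |2 * a + 1| := Int.one_le_abs (by omega)
  exact_mod_cast h1

lemma one_le_norm_oddProdJ (n p : ℕ) : 1 ≤ ‖oddProdJ n p‖ := by
  rw [oddProdJ, norm_prod]
  refine Finset.one_le_prod fun q _ => ?_
  simpa using one_le_norm_odd (q : ℤ)

lemma odd_factorY (n q : ℕ) :
    -2 * (n : ℂ) + 2 * (q : ℂ) + 1 = 2 * (((q : ℤ) - (n : ℤ) : ℤ) : ℂ) + 1 := by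
  push_cast; ring

lemma one_le_norm_oddProdY (n p : ℕ) : 1 ≤ ‖oddProdY n p‖ := by
  rw [oddProdY, norm_prod]
  refine Finset.one_le_prod fun q _ => ?_
  rw [odd_factorY]
  exact one_le_norm_odd _

lemma ne_zero_of_one_le_norm {x : ℂ} (h : 1 ≤ ‖x‖) : x ≠ 0 :=
  norm_pos_iff.mp (by linarith)

lemma summable_besselTerm {c : ℕ → ℂ} (hc : ∀ p, 1 ≤ ‖c p‖) (w : ℂ) :
    Summable (besselTerm c w) := by
  refine Summable.of_norm_bounded (Real.summable_pow_div_factorial (‖w‖ / 2)) fun p => ?_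
  have e : ‖besselTerm c w p‖ = (‖w‖ / 2) ^ p / (Nat.factorial p : ℝ) / ‖c p‖ := by
    simp only [besselTerm, norm_div, norm_mul, norm_pow, norm_neg, norm_one, one_pow, one_mul,
      Complex.norm_natCast, Complex.norm_ofNat, div_pow]
    rw [div_div, div_div, mul_assoc]
  rw [e]
  exact div_le_self (by positivity) (hc p)

/-- Adding two series, the second one shifted by one index. -/
lemma tsum_eq_add_of_shift {T A B : ℕ → ℂ} (hT : Summable T) (hA : Summable A) (hB : Summable B)
    (h0 : T 0 = A 0) (h : ∀ p, T (p + 1) = A (p + 1) + B p) :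
    ∑' p, T p = ∑' p, A p + ∑' p, B p := by
  have hA' : Summable fun p => A (p + 1) := (summable_nat_add_iff 1).mpr hA
  rw [hT.tsum_eq_zero_add, hA.tsum_eq_zero_add, h0, add_assoc, ← hA'.tsum_add hB]
  simp only [h]

lemma jb_eq (n : ℕ) (z : ℂ) : jb n z = z ^ n * ∑' p, besselTerm (oddProdJ n) (z ^ 2) p := by
  rw [jb, ← tsum_mul_left]
  refine tsum_congr fun p => ?_
  rw [besselTerm, oddProdJ, pow_add, pow_mul]
  ring

lemma yb_eq (n : ℕ) {z : ℂ} (hz : z ≠ 0) :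
    yb n z = -normY n * ((z ^ (n + 1))⁻¹ * ∑' p, besselTerm (oddProdY n) (z ^ 2) p) := by
  rw [yb, normY]
  congr 1
  rw [← tsum_mul_left]
  refine tsum_congr fun p => ?_
  have e : z ^ (2 * (p : ℤ) - (n : ℤ) - 1) = (z ^ (n + 1))⁻¹ * (z ^ 2) ^ p := by
    rw [← pow_mul, show 2 * (p : ℤ) - (n : ℤ) - 1 = -((n + 1 : ℕ) : ℤ) + ((2 * p : ℕ) : ℤ) by
      push_cast; ring, zpow_add₀ hz, zpow_neg, zpow_natCast, zpow_natCast]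
  have e2 : ∏ q ∈ Finset.Icc 1 p, (-2 * (n : ℂ) + 2 * (q : ℂ) - 1) = oddProdY n p := by
    rw [oddProdY, Finset.range_eq_Ico,
      ← Finset.Ico_add_one_right_eq_Icc, ← Finset.prod_Ico_add' _ 0 p 1]
    refine Finset.prod_congr rfl fun q _ => ?_
    push_cast; ring
  rw [e, e2, besselTerm]
  ring

lemma jb_recurrence (m : ℕ) {z : ℂ} (hz : z ≠ 0) :
    jb m z + jb (m + 2) z = (2 * (m : ℂ) + 3) / z * jb (m + 1) z := by
  have hs := fun n => summable_besselTerm (one_le_norm_oddProdJ n) (z ^ 2)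
  have key : ∑' p, (2 * (m : ℂ) + 3) * besselTerm (oddProdJ (m + 1)) (z ^ 2) p =
      ∑' p, besselTerm (oddProdJ m) (z ^ 2) p +
        ∑' p, z ^ 2 * besselTerm (oddProdJ (m + 2)) (z ^ 2) p := by
    refine tsum_eq_add_of_shift ((hs _).mul_left _) (hs _) ((hs _).mul_left _) ?_ fun p => ?_
    · have hX := ne_zero_of_one_le_norm (one_le_norm_oddProdJ m 0)
      have hY := ne_zero_of_one_le_norm (one_le_norm_oddProdJ (m + 1) 0)
      have e : oddProdJ (m + 1) 0 = oddProdJ m 0 * (2 * (m : ℂ) + 3) := by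
        simp only [oddProdJ, add_zero]
        rw [Finset.prod_range_succ _ (m + 1)]
        push_cast; ring
      have h3 : (2 * (m : ℂ) + 3) ≠ 0 := fun h => hY (by rw [e, h, mul_zero])
      simp only [besselTerm, e]
      field_simp
    · have hX := ne_zero_of_one_le_norm (one_le_norm_oddProdJ m (p + 1))
      have hY := ne_zero_of_one_le_norm (one_le_norm_oddProdJ (m + 1) (p + 1))
      have e : oddProdJ (m + 1) (p + 1) = oddProdJ m (p + 1) * (2 * ((m : ℂ) + p) + 5) := by
        simp only [oddProdJ]
        rw [show m + 1 + (p + 1) + 1 = m + (p + 1) + 1 + 1 by ring, Finset.prod_range_succ]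
        push_cast; ring
      have e' : oddProdJ (m + 2) p = oddProdJ (m + 1) (p + 1) := by
        simp only [oddProdJ]
        rw [show m + 1 + (p + 1) + 1 = m + 2 + p + 1 by ring]
      have h3 : (2 * ((m : ℂ) + p) + 5) ≠ 0 := fun h => hY (by rw [e, h, mul_zero])
      have hp : (p : ℂ) + 1 ≠ 0 := Nat.cast_add_one_ne_zero p
      have hf : (Nat.factorial p : ℂ) ≠ 0 := by exact_mod_cast p.factorial_ne_zero
      simp only [besselTerm, e', e, Nat.factorial_succ, pow_succ]
      push_cast
      field_simp
      ring
  rw [tsum_mul_left, tsum_mul_left] at key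
  rw [jb_eq, jb_eq, jb_eq]
  have : (2 * (m : ℂ) + 3) / z * (z ^ (m + 1) * ∑' p, besselTerm (oddProdJ (m + 1)) (z ^ 2) p) =
      z ^ m * ((2 * (m : ℂ) + 3) * ∑' p, besselTerm (oddProdJ (m + 1)) (z ^ 2) p) := by
    rw [pow_succ]; field_simp
  rw [this, key]
  ring

lemma normY_succ (n : ℕ) : normY (n + 1) = (2 * (n : ℂ) + 1) * normY n := by
  have hf : (Nat.factorial n : ℂ) ≠ 0 := by exact_mod_cast n.factorial_ne_zero
  have hp : (n : ℂ) + 1 ≠ 0 := Nat.cast_add_one_ne_zero n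
  rw [normY, normY, show 2 * (n + 1) = 2 * n + 1 + 1 by ring]
  simp only [Nat.factorial_succ, pow_succ]
  push_cast
  field_simp
  ring

lemma oddProdY_succ_succ (n p : ℕ) :
    oddProdY (n + 1) (p + 1) = -(2 * (n : ℂ) + 1) * oddProdY n p := by
  rw [oddProdY, Finset.prod_range_succ', oddProdY, mul_comm]
  congr 1
  · push_cast; ring
  · refine Finset.prod_congr rfl fun q _ => ?_
    push_cast; ring

lemma yb_recurrence (m : ℕ) {z : ℂ} (hz : z ≠ 0) :
    yb m z + yb (m + 2) z = (2 * (m : ℂ) + 3) / z * yb (m + 1) z := by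
  have hs := fun n => summable_besselTerm (one_le_norm_oddProdY n) (z ^ 2)
  have h1 : 2 * (m : ℂ) + 1 ≠ 0 := by
    simpa using ne_zero_of_one_le_norm (one_le_norm_odd (m : ℤ))
  have h3 : 2 * (m : ℂ) + 3 ≠ 0 := by
    have := ne_zero_of_one_le_norm (one_le_norm_odd ((m : ℤ) + 1))
    push_cast at this
    convert this using 1
    ring
  have key : ∑' p, (2 * (m : ℂ) + 3) * (2 * (m : ℂ) + 1) *
        besselTerm (oddProdY (m + 1)) (z ^ 2) p =
      ∑' p, (2 * (m : ℂ) + 3) * (2 * (m : ℂ) + 1) * besselTerm (oddProdY (m + 2)) (z ^ 2) p +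
        ∑' p, z ^ 2 * besselTerm (oddProdY m) (z ^ 2) p := by
    refine tsum_eq_add_of_shift ((hs _).mul_left _) ((hs _).mul_left _) ((hs _).mul_left _) ?_
      fun p => ?_
    · simp [besselTerm, oddProdY]
    · have hX := ne_zero_of_one_le_norm (one_le_norm_oddProdY (m + 1) p)
      have hY := ne_zero_of_one_le_norm (one_le_norm_oddProdY m p)
      have e2 : oddProdY (m + 2) (p + 1) = -(2 * (m : ℂ) + 3) * oddProdY (m + 1) p := by
        rw [oddProdY_succ_succ (m + 1) p]
        push_cast; ring
      have e1 := oddProdY_succ_succ m p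
      have e3 : oddProdY (m + 1) (p + 1) = oddProdY (m + 1) p * (2 * (p : ℂ) - 1 - 2 * m) := by
        rw [oddProdY, Finset.prod_range_succ, ← oddProdY]
        push_cast; ring
      have hc : (2 * (p : ℂ) - 1 - 2 * m) ≠ 0 := fun h =>
        ne_zero_of_one_le_norm (one_le_norm_oddProdY (m + 1) (p + 1)) (by rw [e3, h, mul_zero])
      -- all three products are multiples of `oddProdY (m + 1) p`
      have e4 : oddProdY m p =
          oddProdY (m + 1) p * (2 * (p : ℂ) - 1 - 2 * m) / (-(2 * (m : ℂ) + 1)) := by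
        rw [← e3, e1]
        field_simp
      have hp : (p : ℂ) + 1 ≠ 0 := Nat.cast_add_one_ne_zero p
      have hf : (Nat.factorial p : ℂ) ≠ 0 := by exact_mod_cast p.factorial_ne_zero
      simp only [besselTerm, e2, e3, e4, Nat.factorial_succ, pow_succ]
      push_cast
      field_simp
      ring
  rw [tsum_mul_left, tsum_mul_left, tsum_mul_left] at key
  rw [yb_eq _ hz, yb_eq _ hz, yb_eq _ hz, normY_succ (m + 1), normY_succ m]
  push_cast
  simp only [pow_succ]
  field_simp
  linear_combination normY m * key

lemma hb_recurrence (m : ℕ) {z : ℂ} (hz : z ≠ 0) :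
    hb m z + hb (m + 2) z = (2 * (m : ℂ) + 3) / z * hb (m + 1) z := by
  simp only [hb]
  linear_combination jb_recurrence m hz + Complex.I * yb_recurrence m hz

/-- Identity for ηₙ(k) (n ≥ 1) obtained from the Bessel recurrence relations. -/
theorem etaN_identity (lam mu : ℝ) (hmu : 0 < mu) (hlm : 0 < 3 * lam + 2 * mu)
    (n : ℕ) (hn : 1 ≤ n) (k : ℝ) (hk : 0 < k) :
    etaN lam mu n k =
      -Complex.I *
        ((n : ℂ) * ((n : ℂ) + 1) * jb n (ksC mu k) * hb n (ksC mu k) / ((mu : ℂ) * ksC mu k) -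
         (n : ℂ) * ((n : ℂ) + 1) * jb n (kpC lam mu k) * hb n (kpC lam mu k) /
            (((lam : ℂ) + 2 * (mu : ℂ)) * kpC lam mu k) +
         (n : ℂ) * kpC lam mu k * jb (n - 1) (kpC lam mu k) * hb (n - 1) (kpC lam mu k) /
            (((lam : ℂ) + 2 * (mu : ℂ)) * (2 * (n : ℂ) + 1)) +
         ((n : ℂ) + 1) * kpC lam mu k * jb (n + 1) (kpC lam mu k) * hb (n + 1) (kpC lam mu k) /
            (((lam : ℂ) + 2 * (mu : ℂ)) * (2 * (n : ℂ) + 1))) := by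
  obtain ⟨m, rfl⟩ : ∃ m, n = m + 1 := ⟨n - 1, by omega⟩
  have hl : 0 < lam + 2 * mu := by linarith
  have hs : ksC mu k ≠ 0 := by
    rw [ksC]
    exact_mod_cast (div_pos hk (Real.sqrt_pos.mpr hmu)).ne'
  have hp : kpC lam mu k ≠ 0 := by
    rw [kpC]
    exact_mod_cast (div_pos hk (Real.sqrt_pos.mpr hl)).ne'
  have hmu' : (mu : ℂ) ≠ 0 := by exact_mod_cast hmu.ne'
  have hl' : (lam : ℂ) + 2 * (mu : ℂ) ≠ 0 := by exact_mod_cast hl.ne'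
  have hN : 2 * ((m : ℂ) + 1) + 1 ≠ 0 := by
    simpa using ne_zero_of_one_le_norm (one_le_norm_odd ((m : ℤ) + 1))
  -- the recurrence solved for the middle index
  have mid : ∀ {z a b c : ℂ}, z ≠ 0 → a + b = (2 * (m : ℂ) + 3) / z * c →
      c = z * (a + b) / (2 * ((m : ℂ) + 1) + 1) := by
    intro z a b c hz h
    rw [h, eq_div_iff hN]
    field_simp
    ring
  have js := mid hs (jb_recurrence m hs)
  have jp := mid hp (jb_recurrence m hp)
  have hhs := mid hs (hb_recurrence m hs)
  have hhp := mid hp (hb_recurrence m hp)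
  simp only [etaN, c1n, c2n, d1n, d2n, Nat.add_sub_cancel, show m + 1 + 1 = m + 2 from rfl]
  rw [js, jp, hhs, hhp]
  push_cast
  generalize ksC mu k = s at *
  generalize kpC lam mu k = t at *
  generalize (lam : ℂ) + 2 * (mu : ℂ) = L at *
  field_simp
  ring
end
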